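/- The map (a⊗b)g ↦ ag ⊗ (^{g^{-1}}b)g^{-1} (for a, b ∈ A and g ∈ G) is an isomorphism of k-algebras from the smash product A^e # kG, where G acts diagonally on A^e = A ⊗ A^op by ^g(a⊗b) = ^g a ⊗ ^g b, onto the subalgebra ⊕_{g∈G} (Ag ⊗ Ag^{-1}) of B^e = B ⊗ B^op. -/

import Mathlib

/- STATEMENT 2:
The map `(a⊗b)g ↦ ag ⊗ (^{g⁻¹}b)g⁻¹` is an isomorphism of `k`-algebras from
the smash product `Aᵉ # kG` (with `G` acting diagonally on `Aᵉ = A ⊗ Aᵒᵖ`)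
onto the subalgebra `⊕_{g ∈ G} (Ag ⊗ Ag⁻¹)` of `Bᵉ = B ⊗ Bᵒᵖ`. -/

open TensorProduct MulOpposite Polynomial CategoryTheory

noncomputable section

variable (k : Type) [Field k]
variable (G : Type) [Group G] [Fintype G]
variable (χ : G →* kˣ)
variable (n : ℕ)

/-- `A = k[x]/(xⁿ)`. -/
abbrev AA : Type := Polynomial k ⧸ Ideal.span {(Polynomial.X : Polynomial k) ^ n}

/-- The class of `x` in `A = k[x]/(xⁿ)`. -/
def xA : AA k n := Ideal.Quotient.mk _ Polynomial.X

variable (σ : G →* (AA k n ≃ₐ[k] AA k n))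
variable (B : Type) [Ring B] [Algebra k B]
variable (ιA : AA k n →ₐ[k] B) (ιG : G →* Bˣ)

/-- The map `G →₀ A → B`, `∑ aₘ·g ↦ ∑ ιA(aₘ)·ιG(g)`; bijectivity says that
`B` is free as a left `A`-module with basis `G`, i.e. `B = A ⊗ kG` as a vector
space. -/
def skewCombine : (G →₀ AA k n) →ₗ[k] B :=
  Finsupp.lsum k fun g : G =>
    (LinearMap.mulRight k ((ιG g : Bˣ) : B)).comp ιA.toLinearMap

/-- `B` is the skew group algebra (smash product) `A # kG` for the action `σ`
of `G` on `A = k[x]/(xⁿ)` determined by `σ g x = χ(g)·x`. -/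
structure IsSkewGroupAlgebra : Prop where
  action_x : ∀ g : G, σ g (xA k n) = (χ g : k) • xA k n
  comm : ∀ (g : G) (a : AA k n), ((ιG g : Bˣ) : B) * ιA a = ιA (σ g a) * ((ιG g : Bˣ) : B)
  bijective : Function.Bijective (skewCombine k G n B ιA ιG)


/-- `Aᵉ = A ⊗ₖ Aᵒᵖ`. -/
abbrev Ae : Type := AA k n ⊗[k] (AA k n)ᵐᵒᵖ

/-- The subspace `⊕_{g ∈ G} (Ag ⊗ Ag⁻¹)` of `Bᵉ = B ⊗ Bᵒᵖ`. -/
def DD : Submodule k (B ⊗[k] Bᵐᵒᵖ) :=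
  Submodule.span k
    {z | ∃ (a b : AA k n) (g : G),
      z = (ιA a * ((ιG g : Bˣ) : B)) ⊗ₜ[k] op (ιA b * ((ιG g⁻¹ : Bˣ) : B))}

variable (C : Type) [Ring C] [Algebra k C]
variable (ιAe : Ae k n →ₐ[k] C) (ιG' : G →* Cˣ)

/-- The map `G →₀ Aᵉ → C`; its bijectivity says `C = Aᵉ ⊗ kG` as a vector
space. -/
def skewCombine' : (G →₀ Ae k n) →ₗ[k] C :=
  Finsupp.lsum k fun g : G =>
    (LinearMap.mulRight k ((ιG' g : Cˣ) : C)).comp ιAe.toLinearMap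

/-- `C` is the smash product `Aᵉ # kG` for the diagonal action of `G` on
`Aᵉ = A ⊗ Aᵒᵖ`, `^g(a ⊗ b) = ^g a ⊗ ^g b`. -/
structure IsDiagSkewGroupAlgebra : Prop where
  comm : ∀ (g : G) (a b : AA k n),
    ((ιG' g : Cˣ) : C) * ιAe (a ⊗ₜ[k] op b) =
      ιAe (σ g a ⊗ₜ[k] op (σ g b)) * ((ιG' g : Cˣ) : C)
  bijective : Function.Bijective (skewCombine' k G n C ιAe ιG')

variable {k G n σ C ιAe ιG'} in
/-- Every element of `C` is a sum of elements `(a ⊗ b)g`. -/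
theorem IsDiagSkewGroupAlgebra.induction
    (hdiag : IsDiagSkewGroupAlgebra k G n σ C ιAe ιG') {P : C → Prop}
    (zero : P 0) (add : ∀ c d, P c → P d → P (c + d))
    (mul : ∀ (a b : AA k n) (g : G), P (ιAe (a ⊗ₜ[k] op b) * ((ιG' g : Cˣ) : C)))
    (c : C) : P c := by
  obtain ⟨s, rfl⟩ := hdiag.bijective.2 c
  induction s using Finsupp.induction_linear with
  | zero => simpa using zero
  | add s t hs ht => rw [map_add]; exact add _ _ hs ht
  | single g x =>
    simp only [skewCombine', Finsupp.lsum_single, LinearMap.comp_apply,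
      LinearMap.mulRight_apply, AlgHom.toLinearMap_apply]
    induction x using TensorProduct.induction_on with
    | zero => simpa using zero
    | tmul a b => exact mul a b.unop g
    | add x y hx hy => rw [map_add, add_mul]; exact add _ _ hx hy

/-- The linear map `(a⊗b)g ↦ ag ⊗ g⁻¹b` on `Aᵉ ⊗ kG`, realised as `G →₀ Aᵉ`. -/
def diagCombine : (G →₀ Ae k n) →ₗ[k] B ⊗[k] Bᵐᵒᵖ :=
  Finsupp.lsum k fun g : G =>
    (LinearMap.mulRight k (((ιG g : Bˣ) : B) ⊗ₜ[k] op ((ιG g⁻¹ : Bˣ) : B))).comp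
      (Algebra.TensorProduct.map ιA (AlgHom.op ιA)).toLinearMap

theorem diagCombine_single_tmul (g : G) (a b : AA k n) :
    diagCombine k G n B ιA ιG (Finsupp.single g (a ⊗ₜ[k] op b)) =
      (ιA a * ((ιG g : Bˣ) : B)) ⊗ₜ[k] op (((ιG g⁻¹ : Bˣ) : B) * ιA b) := by
  simp [diagCombine]

theorem skewCombine_single (g : G) (a : AA k n) :
    skewCombine k G n B ιA ιG (Finsupp.single g a) = ιA a * ((ιG g : Bˣ) : B) := by
  simp [skewCombine]

theorem skewCombine'_single (g : G) (x : Ae k n) :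
    skewCombine' k G n C ιAe ιG' (Finsupp.single g x) = ιAe x * ((ιG' g : Cˣ) : C) := by
  simp [skewCombine']

variable {k G χ n σ B ιA ιG} in
/-- The coefficient of `h` in each factor recovers the `h`-component of an element of
`Aᵉ ⊗ kG`. -/
theorem IsSkewGroupAlgebra.diagCombine_injective
    (hskew : IsSkewGroupAlgebra k G χ n σ B ιA ιG) :
    Function.Injective (diagCombine k G n B ιA ιG) := by
  classical
  let e := LinearEquiv.ofBijective _ hskew.bijective
  let coeff (h : G) : B →ₗ[k] AA k n := Finsupp.lapply h ∘ₗ e.symm.toLinearMap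
  have coeff_mul (h g : G) (a : AA k n) :
      coeff h (ιA a * ((ιG g : Bˣ) : B)) = Finsupp.single g a h := by
    have : e.symm (ιA a * ((ιG g : Bˣ) : B)) = Finsupp.single g a := by
      rw [LinearEquiv.symm_apply_eq]
      exact (skewCombine_single k G n B ιA ιG g a).symm
    simp [coeff, this]
  let proj (h : G) : B ⊗[k] Bᵐᵒᵖ →ₗ[k] Ae k n :=
    TensorProduct.map (coeff h)
      ((opLinearEquiv k).toLinearMap ∘ₗ (σ h).toLinearMap ∘ₗ coeff h⁻¹ ∘ₗ
        (opLinearEquiv k).symm.toLinearMap)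
  have proj_diagCombine (h : G) :
      proj h ∘ₗ diagCombine k G n B ιA ιG = Finsupp.lapply h := by
    ext1 g
    refine TensorProduct.ext' fun a b => ?_
    induction b using MulOpposite.rec' with | _ b
    have hσ : σ g (σ g⁻¹ b) = b := by
      rw [← AlgEquiv.mul_apply, ← map_mul]; simp
    simp only [LinearMap.comp_apply, Finsupp.lsingle_apply, diagCombine_single_tmul,
      hskew.comm, Finsupp.lapply_apply, proj, TensorProduct.map_tmul, coeff_mul]
    by_cases hg : g = h
    · subst hg
      have hb := coeff_mul g⁻¹ g⁻¹ (σ g⁻¹ b)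
      rw [Finsupp.single_eq_same] at hb
      simp only [Finsupp.single_eq_same, LinearEquiv.coe_coe,
        coe_opLinearEquiv_symm, unop_op, hb, AlgEquiv.toLinearMap_apply, hσ,
        coe_opLinearEquiv]
    · simp [Finsupp.single_eq_of_ne' hg]
  intro s t hst
  ext1 h
  have := congrArg (proj h) hst
  rwa [← LinearMap.comp_apply, ← LinearMap.comp_apply, proj_diagCombine] at this

variable {k G χ n σ B ιA ιG} in
/-- The product rule for the elements `ag ⊗ g⁻¹b` of `B ⊗ Bᵒᵖ`. -/
theorem IsSkewGroupAlgebra.tmul_mul_tmul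
    (hskew : IsSkewGroupAlgebra k G χ n σ B ιA ιG) (a b c d : AA k n) (g h : G) :
    ((ιA a * ((ιG g : Bˣ) : B)) ⊗ₜ[k] op (((ιG g⁻¹ : Bˣ) : B) * ιA b)) *
        ((ιA c * ((ιG h : Bˣ) : B)) ⊗ₜ[k] op (((ιG h⁻¹ : Bˣ) : B) * ιA d)) =
      (ιA (a * σ g c) * ((ιG (g * h) : Bˣ) : B)) ⊗ₜ[k]
        op (((ιG (g * h)⁻¹ : Bˣ) : B) * ιA (σ g d * b)) := by
  have hd : ιA d * ((ιG g⁻¹ : Bˣ) : B) = ((ιG g⁻¹ : Bˣ) : B) * ιA (σ g d) := by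
    rw [hskew.comm, ← AlgEquiv.mul_apply, ← map_mul]; simp
  rw [Algebra.TensorProduct.tmul_mul_tmul, ← op_mul]
  congr 1
  · rw [mul_assoc, ← mul_assoc _ (ιA c), hskew.comm]
    simp only [map_mul, Units.val_mul, mul_assoc]
  · congr 1
    rw [mul_assoc, ← mul_assoc (ιA d), hd]
    simp only [mul_inv_rev, map_mul, Units.val_mul, mul_assoc]

/-- **Statement 2.** The map `(a⊗b)g ↦ ag ⊗ (^{g⁻¹}b)g⁻¹` is an isomorphism
of `k`-algebras from `Aᵉ # kG` onto the subalgebra `⊕_{g∈G}(Ag ⊗ Ag⁻¹)` of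
`Bᵉ`. -/
theorem statement2
    (hskew : IsSkewGroupAlgebra k G χ n σ B ιA ιG)
    (hdiag : IsDiagSkewGroupAlgebra k G n σ C ιAe ιG') :
    ∃ f : C →ₐ[k] B ⊗[k] Bᵐᵒᵖ,
      Function.Injective f ∧
      LinearMap.range f.toLinearMap = DD k G n B ιA ιG ∧
      ∀ (a b : AA k n) (g : G),
        f (ιAe (a ⊗ₜ[k] op b) * ((ιG' g : Cˣ) : C)) =
          (ιA a * ((ιG g : Bˣ) : B)) ⊗ₜ[k]
            op (ιA (σ g⁻¹ b) * ((ιG g⁻¹ : Bˣ) : B)) := by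
  let e := LinearEquiv.ofBijective _ hdiag.bijective
  let L : C →ₗ[k] B ⊗[k] Bᵐᵒᵖ := diagCombine k G n B ιA ιG ∘ₗ e.symm.toLinearMap
  have hL (a b : AA k n) (g : G) : L (ιAe (a ⊗ₜ[k] op b) * ((ιG' g : Cˣ) : C)) =
      (ιA a * ((ιG g : Bˣ) : B)) ⊗ₜ[k] op (((ιG g⁻¹ : Bˣ) : B) * ιA b) := by
    have : e.symm (ιAe (a ⊗ₜ[k] op b) * ((ιG' g : Cˣ) : C)) =
        Finsupp.single g (a ⊗ₜ[k] op b) := by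
      rw [LinearEquiv.symm_apply_eq]
      exact (skewCombine'_single k G n C ιAe ιG' g _).symm
    simp only [L, LinearMap.comp_apply, LinearEquiv.coe_coe, this, diagCombine_single_tmul]
  have map_one : L 1 = 1 := by
    have h := hL 1 1 1
    have hone : ιAe (1 ⊗ₜ[k] op 1) = 1 := ιAe.map_one'
    rw [hone] at h
    simpa [← Algebra.TensorProduct.one_def] using h
  have map_mul (c d : C) : L (c * d) = L c * L d := by
    induction c using hdiag.induction with
    | zero => simp
    | add c c' hc hc' => simp only [add_mul, map_add, hc, hc']
    | mul a b g =>
      induction d using hdiag.induction with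
      | zero => simp
      | add d d' hd hd' => simp only [mul_add, map_add, hd, hd']
      | mul a' b' h =>
        rw [hL, hL, hskew.tmul_mul_tmul, ← hL]
        congr 1
        rw [mul_assoc, ← mul_assoc _ (ιAe _), hdiag.comm, op_mul,
          ← Algebra.TensorProduct.tmul_mul_tmul]
        simp only [_root_.map_mul, Units.val_mul, mul_assoc]
  refine ⟨AlgHom.ofLinearMap L map_one map_mul,
    hskew.diagCombine_injective.comp e.symm.injective, le_antisymm ?_ ?_, ?_⟩
  · rintro _ ⟨c, rfl⟩
    change L c ∈ _
    induction c using hdiag.induction with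
    | zero => simp
    | add c d hc hd => rw [map_add]; exact add_mem hc hd
    | mul a b g =>
      rw [hL, hskew.comm]
      exact Submodule.subset_span ⟨_, _, _, rfl⟩
  · refine Submodule.span_le.2 ?_
    rintro _ ⟨a, b, g, rfl⟩
    refine ⟨ιAe (a ⊗ₜ[k] op (σ g b)) * ((ιG' g : Cˣ) : C), ?_⟩
    change L _ = _
    rw [hL, hskew.comm, ← AlgEquiv.mul_apply, ← _root_.map_mul]
    simp
  · intro a b g
    change L _ = _
    rw [hL, hskew.comm]

end
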